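/- Let J be a finite index set, let d be a positive integer, let (c_j)_{j∈J} be complex numbers, and let ((γ_j, φ_j))_{j∈J} be a family of pairwise distinct pairs where each γ_j ∈ ℝ and each φ_j is a real polynomial with φ_j(0) = 0. Define E : (0,∞) → ℂ by E(y) = ∑_{j∈J} c_j · y^{iγ_j} · e^{i φ_j(y^{−1/d})}. Let b > 0, let r ≤ −1 be real, let s ∈ ℕ, and let f : (0,b) → ℂ be given by f(y) = y^r (log y)^s E(y) + g(y), where g : (0,b) → ℂ satisfies g(y) = o(y^r (log y)^s) as y → 0⁺. If f is Lebesgue integrable on (0,b), then c_j = 0 for all j ∈ J. -/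

import Mathlib

open Filter Asymptotics MeasureTheory

/-!
Average in the variable `log y` as `y → 0⁺`. A term `y^{iγ} e^{iφ(y^a)}` with `a < 0`, `φ(0) = 0`
and `(γ, φ) ≠ (0, 0)` is `e^{iθ}` with `y θ'(y) = Q(y^a)` for a nonzero polynomial `Q`. Hence
`e^{iθ} / (i Q(y^a))` is bounded and is a primitive of `e^{iθ} / y` up to `o(1 / y)`, so the term
has mean `0`. Therefore `E(y)`, divided by its unimodular `j`-th oscillation, has mean `c_j`. On the
other hand `E(y) = o(1) + O(y |f(y)|)` because the weight dominates `1 / y`, and integrability of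
`f` forces such a function to have mean `0`.
-/

open scoped Topology Polynomial

section LogGrowth

variable {F : Type*} [NormedAddCommGroup F] [NormedSpace ℝ F] {G G' : ℝ → F} {k : ℝ → ℝ}

lemma norm_sub_le_integral_add_mul_log {ε a x : ℝ} (hx : 0 < x) (hxa : x ≤ a)
    (hk : IntervalIntegrable k volume x a)
    (hG : ∀ y ∈ Set.Icc x a, HasDerivAt G (G' y) y)
    (hG' : ∀ y ∈ Set.Icc x a, ‖G' y‖ ≤ k y + ε * y⁻¹) :
    ‖G a - G x‖ ≤ (∫ y in x..a, k y) + ε * Real.log (a / x) := by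
  have hinv : IntervalIntegrable (fun y : ℝ => ε * y⁻¹) volume x a :=
    (intervalIntegrable_inv_iff.2 (.inr (Set.notMem_uIcc_of_lt hx (hx.trans_le hxa)))).const_mul ε
  calc ‖G a - G x‖ ≤ ∫ y in x..a, (k y + ε * y⁻¹) := by
        refine norm_sub_le_integral_of_norm_deriv_le_of_le hxa
          (fun y hy => (hG y hy).continuousAt.continuousWithinAt)
          (fun y hy => (hG y (Set.Ioo_subset_Icc_self hy)).differentiableAt.differentiableWithinAt)
          (.of_forall fun y hy => ?_) (hk.add hinv)
        rw [(hG y (Set.Ioo_subset_Icc_self hy)).deriv]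
        exact hG' y (Set.Ioo_subset_Icc_self hy)
    _ = (∫ y in x..a, k y) + ε * Real.log (a / x) := by
        rw [intervalIntegral.integral_add hk hinv, intervalIntegral.integral_const_mul,
          integral_inv_of_pos hx (hx.trans_le hxa)]

lemma isLittleO_const_log_nhdsGT_zero (C : ℝ) : (fun _ : ℝ => C) =o[𝓝[>] 0] Real.log :=
  (isLittleO_const_id_atBot C).comp_tendsto Real.tendsto_log_nhdsGT_zero

lemma exists_eventually_norm_le_sub_mul_log {ε : ℝ}
    (hk : IntegrableAtFilter k (𝓝[>] 0)) (hG : ∀ᶠ y in 𝓝[>] 0, HasDerivAt G (G' y) y)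
    (hG' : ∀ᶠ y in 𝓝[>] 0, ‖G' y‖ ≤ k y + ε * y⁻¹) :
    ∃ C, ∀ᶠ x in 𝓝[>] 0, ‖G x‖ ≤ C - ε * Real.log x := by
  obtain ⟨s, hs, hks⟩ := hk
  obtain ⟨a, ha, has⟩ := mem_nhdsGT_iff_exists_Ioc_subset.1 (inter_mem hs (hG.and hG'))
  refine ⟨‖G a‖ + (∫ y in s, ‖k y‖) + ε * Real.log a, ?_⟩
  filter_upwards [Ioc_mem_nhdsGT ha] with x ⟨hx, hxa⟩
  have hIcc : Set.Icc x a ⊆ Set.Ioc 0 a := fun y hy => ⟨hx.trans_le hy.1, hy.2⟩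
  have hIoc : Set.Ioc x a ⊆ s := fun y hy => (has (hIcc (Set.Ioc_subset_Icc_self hy))).1
  have hkxa : IntervalIntegrable k volume x a :=
    (intervalIntegrable_iff_integrableOn_Ioc_of_le hxa).2 (hks.mono_set hIoc)
  have hkle : ∫ y in x..a, k y ≤ ∫ y in s, ‖k y‖ :=
    calc ∫ y in x..a, k y ≤ ∫ y in Set.Ioc x a, ‖k y‖ :=
          (Real.le_norm_self _).trans
            (intervalIntegral.norm_integral_le_integral_norm_uIoc.trans_eq (by
              rw [Set.uIoc_of_le hxa]))
      _ ≤ ∫ y in s, ‖k y‖ :=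
          setIntegral_mono_set hks.norm (ae_of_all _ fun _ => norm_nonneg _) hIoc.eventuallyLE
  have hGxa := norm_sub_le_integral_add_mul_log hx hxa hkxa
    (fun y hy => (has (hIcc hy)).2.1) (fun y hy => (has (hIcc hy)).2.2)
  rw [Real.log_div (hx.trans_le hxa).ne' hx.ne'] at hGxa
  linarith [norm_le_norm_add_norm_sub (G a) (G x)]

lemma isLittleO_log_of_norm_deriv_le (hk : IntegrableAtFilter k (𝓝[>] 0))
    (hG : ∀ᶠ y in 𝓝[>] 0, HasDerivAt G (G' y) y)
    (hG' : ∀ ε > 0, ∀ᶠ y in 𝓝[>] 0, ‖G' y‖ ≤ k y + ε * y⁻¹) :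
    G =o[𝓝[>] 0] Real.log := by
  refine IsLittleO.of_bound fun ε hε => ?_
  obtain ⟨C, hC⟩ := exists_eventually_norm_le_sub_mul_log hk hG (hG' (ε / 2) (half_pos hε))
  filter_upwards [hC, (isLittleO_const_log_nhdsGT_zero C).bound (half_pos hε)] with x hGx hCx
  have hlog : -Real.log x ≤ ‖Real.log x‖ := neg_le_abs _
  have hCle : C ≤ ‖C‖ := Real.le_norm_self C
  nlinarith

end LogGrowth

/-- `u` has mean `m` as `y → 0⁺` with respect to the measure `dy / y`. Instead of the averages
`(log (1 / x))⁻¹ ∫_x^1 u(y) dy / y`, for which `u` would have to be locally integrable, the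
definition takes a primitive `G` of `u(y) / y` up to an error `o(1 / y)` and asks for
`G(y) / log y → m`. -/
def HasLogMean {F : Type*} [NormedAddCommGroup F] [NormedSpace ℝ F] (u : ℝ → F) (m : F) : Prop :=
  ∃ G G' : ℝ → F, (∀ᶠ y in 𝓝[>] 0, HasDerivAt G (G' y) y) ∧
    Tendsto (fun y => u y - y • G' y) (𝓝[>] 0) (𝓝 0) ∧
    Tendsto (fun y => (Real.log y)⁻¹ • G y) (𝓝[>] 0) (𝓝 m)

namespace HasLogMean

variable {F F' : Type*} [NormedAddCommGroup F] [NormedSpace ℝ F]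
  [NormedAddCommGroup F'] [NormedSpace ℝ F'] {u v : ℝ → F} {m : F}

lemma of_tendsto_sub_zero (hu : HasLogMean u m)
    (huv : Tendsto (fun y => v y - u y) (𝓝[>] 0) (𝓝 0)) : HasLogMean v m := by
  obtain ⟨G, G', hG, hG', hlim⟩ := hu
  exact ⟨G, G', hG, by simpa using huv.add hG', hlim⟩

lemma sum {ι : Type*} {s : Finset ι} {u : ι → ℝ → F} {m : ι → F}
    (hu : ∀ i ∈ s, HasLogMean (u i) (m i)) :
    HasLogMean (fun y => ∑ i ∈ s, u i y) (∑ i ∈ s, m i) := by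
  choose! G G' hG hG' hlim using hu
  refine ⟨fun y => ∑ i ∈ s, G i y, fun y => ∑ i ∈ s, G' i y, ?_, ?_, ?_⟩
  · filter_upwards [(eventually_all_finset s).2 hG] with y hy
    exact HasDerivAt.fun_sum hy
  · simpa [Finset.smul_sum] using tendsto_finsetSum s hG'
  · simpa only [Finset.smul_sum] using tendsto_finsetSum s hlim

lemma clm_apply (L : F →L[ℝ] F') (hu : HasLogMean u m) : HasLogMean (fun y => L (u y)) (L m) := by
  obtain ⟨G, G', hG, hG', hlim⟩ := hu
  refine ⟨fun y => L (G y), fun y => L (G' y), ?_, ?_, ?_⟩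
  · filter_upwards [hG] with y hy using L.hasFDerivAt.comp_hasDerivAt y hy
  · simpa [Function.comp_def] using (L.continuous.tendsto 0).comp hG'
  · simpa [Function.comp_def] using (L.continuous.tendsto m).comp hlim

lemma const (m : F) : HasLogMean (fun _ => m) m := by
  refine ⟨fun y => Real.log y • m, fun y => y⁻¹ • m, ?_, ?_, ?_⟩
  · filter_upwards [self_mem_nhdsWithin] with y hy
    exact (Real.hasDerivAt_log (ne_of_gt hy)).smul_const m
  · refine tendsto_const_nhds.congr' ?_
    filter_upwards [self_mem_nhdsWithin] with y hy
    rw [smul_inv_smul₀ (ne_of_gt hy), sub_self]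
  · refine tendsto_const_nhds.congr' ?_
    filter_upwards [Real.tendsto_log_nhdsGT_zero.eventually_ne_atBot 0] with y hy
    rw [inv_smul_smul₀ hy]

lemma eq_zero_of_isBigO {f : ℝ → F'} (hu : HasLogMean u m)
    (hf : IntegrableAtFilter f (𝓝[>] 0)) (huf : u =O[𝓝[>] 0] fun y => y • f y) : m = 0 := by
  obtain ⟨G, G', hG, hG', hlim⟩ := hu
  obtain ⟨C, hC⟩ := huf.bound
  suffices hGlog : G =o[𝓝[>] 0] Real.log from
    tendsto_nhds_unique hlim hGlog.tendsto_inv_smul_nhds_zero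
  refine isLittleO_log_of_norm_deriv_le (hf.norm.smul C) hG fun ε hε => ?_
  filter_upwards [hC, hG'.norm.eventually_le_const (by simpa using hε),
    self_mem_nhdsWithin] with y huy hRy hy
  have hy : 0 < y := hy
  have hnorm : ‖y • G' y‖ ≤ C * ‖y • f y‖ + ε :=
    calc ‖y • G' y‖ ≤ ‖u y‖ + ‖u y - y • G' y‖ := norm_le_norm_add_norm_sub _ _
      _ ≤ C * ‖y • f y‖ + ε := add_le_add huy hRy
  rw [norm_smul, norm_smul, Real.norm_of_nonneg hy.le] at hnorm
  rw [← mul_le_mul_iff_right₀ hy]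
  calc y * ‖G' y‖ ≤ C * (y * ‖f y‖) + ε := hnorm
    _ = y * (C • ‖f y‖ + ε * y⁻¹) := by simp only [smul_eq_mul]; field_simp

lemma cexp_mul_I_zero {θ q p : ℝ → ℝ} (hθ : ∀ᶠ y in 𝓝[>] 0, HasDerivAt θ (q y / y) y)
    (hq : ∀ᶠ y in 𝓝[>] 0, HasDerivAt q (p y / y) y) (hq0 : ∀ᶠ y in 𝓝[>] 0, q y ≠ 0)
    (hqlog : (fun y => (q y)⁻¹) =o[𝓝[>] 0] Real.log)
    (hpq : Tendsto (fun y => p y / q y ^ 2) (𝓝[>] 0) (𝓝 0)) :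
    HasLogMean (fun y => Complex.exp (θ y * Complex.I)) 0 := by
  refine ⟨fun y => Complex.exp (θ y * Complex.I) * (-Complex.I * ((q y)⁻¹ : ℝ)),
    fun y => Complex.exp (θ y * Complex.I) * (1 + Complex.I * (p y / q y ^ 2 : ℝ)) / y,
    ?_, ?_, ?_⟩
  · filter_upwards [hθ, hq, hq0, self_mem_nhdsWithin] with y hθy hqy hq0y hy
    have hy : (y : ℂ) ≠ 0 := Complex.ofReal_ne_zero.2 (ne_of_gt hy)
    have hqc : (q y : ℂ) ≠ 0 := Complex.ofReal_ne_zero.2 hq0y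
    refine ((hθy.ofReal_comp.mul_const Complex.I).cexp.mul
      ((hqy.fun_inv hq0y).ofReal_comp.const_mul (-Complex.I))).congr_deriv ?_
    push_cast
    field_simp
    linear_combination (-(q y : ℂ) ^ 2) * Complex.I_sq
  · rw [tendsto_zero_iff_norm_tendsto_zero] at hpq ⊢
    refine hpq.congr' ?_
    filter_upwards [self_mem_nhdsWithin] with y hy
    have hy : (y : ℂ) ≠ 0 := Complex.ofReal_ne_zero.2 (ne_of_gt hy)
    rw [Complex.real_smul, mul_div_cancel₀ _ hy, mul_add, mul_one, sub_add_cancel_left, norm_neg,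
      norm_mul, norm_mul, Complex.norm_exp_ofReal_mul_I, Complex.norm_I, Complex.norm_real,
      one_mul, one_mul]
  · refine ((isBigO_of_le _ fun y => ?_).trans_isLittleO hqlog).tendsto_inv_smul_nhds_zero
    rw [norm_mul, norm_mul, Complex.norm_exp_ofReal_mul_I, norm_neg, Complex.norm_I,
      Complex.norm_real, one_mul, one_mul]

end HasLogMean

section EulerDeriv

/-- The polynomial `a X P'`: the action of the Euler operator `y d/dy` on `P(y^a)`, expressed in the
variable `X = y^a`. -/
noncomputable def eulerDeriv (a : ℝ) (P : ℝ[X]) : ℝ[X] :=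
  Polynomial.C a * (Polynomial.X * Polynomial.derivative P)

lemma hasDerivAt_eval_rpow (a : ℝ) (P : ℝ[X]) {y : ℝ} (hy : 0 < y) :
    HasDerivAt (fun y => P.eval (y ^ a)) ((eulerDeriv a P).eval (y ^ a) / y) y := by
  refine ((P.hasDerivAt _).comp y (Real.hasDerivAt_rpow_const (.inl hy.ne'))).congr_deriv ?_
  simp only [eulerDeriv, Polynomial.eval_mul, Polynomial.eval_C, Polynomial.eval_X,
    Real.rpow_sub_one hy.ne']
  ring

lemma C_add_eulerDeriv_ne_zero {a γ : ℝ} {P : ℝ[X]} (ha : a ≠ 0) (hP : P.eval 0 = 0)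
    (h : γ ≠ 0 ∨ P ≠ 0) : Polynomial.C γ + eulerDeriv a P ≠ 0 := by
  intro hzero
  have hγ : γ = 0 := by simpa [eulerDeriv] using congrArg (Polynomial.eval 0) hzero
  have hderiv : Polynomial.derivative P = 0 := by simpa [eulerDeriv, hγ, ha] using hzero
  have hPC := Polynomial.eq_C_of_derivative_eq_zero hderiv
  have hP0 : P = 0 := by rw [hPC, Polynomial.coeff_zero_eq_eval_zero, hP, Polynomial.C_0]
  exact h.elim (· hγ) (· hP0)

lemma isBigO_inv_eval_atTop {Q : ℝ[X]} (hQ : Q ≠ 0) :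
    (fun x => (Q.eval x)⁻¹) =O[atTop] fun _ => (1 : ℝ) := by
  have hone : (fun _ => (1 : ℝ)) =O[atTop] fun x => Q.eval x := by
    simpa using Polynomial.isBigO_atTop_of_degree_le 1 Q
      (Polynomial.degree_one_le.trans (Polynomial.zero_le_degree_iff.2 hQ))
  simpa using hone.inv_rev (.of_forall fun _ h => absurd h one_ne_zero)

lemma tendsto_eulerDeriv_div_sq_atTop (a : ℝ) (Q : ℝ[X]) :
    Tendsto (fun x => (eulerDeriv a Q).eval x / Q.eval x ^ 2) atTop (𝓝 0) := by
  by_cases hQ : Q.natDegree = 0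
  · simp [eulerDeriv, Polynomial.derivative_of_natDegree_zero hQ]
  have hdeg : (eulerDeriv a Q).natDegree < (Q ^ 2).natDegree :=
    calc (eulerDeriv a Q).natDegree ≤ 1 + (Polynomial.derivative Q).natDegree :=
          (Polynomial.natDegree_C_mul_le _ _).trans
            (Polynomial.natDegree_mul_le.trans_eq (by rw [Polynomial.natDegree_X]))
      _ < (Q ^ 2).natDegree := by
          have := Polynomial.natDegree_derivative_lt hQ
          rw [Polynomial.natDegree_pow]
          lia
  simpa using Polynomial.div_tendsto_atTop_zero_of_degree_lt _ _ (Polynomial.degree_lt_degree hdeg)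

end EulerDeriv

/-- The oscillation `y^{iγ} e^{iP(y^a)}`; the paper's exponent is `a = -1/d`. -/
noncomputable def wave (a γ : ℝ) (P : ℝ[X]) (y : ℝ) : ℂ :=
  (y : ℂ) ^ (Complex.I * γ) * Complex.exp (Complex.I * (P.eval (y ^ a) : ℝ))

section Wave

variable {a γ γ₀ : ℝ} {P P₀ : ℝ[X]} {y : ℝ}

lemma wave_eq_cexp (hy : 0 < y) :
    wave a γ P y = Complex.exp ((γ * Real.log y + P.eval (y ^ a) : ℝ) * Complex.I) := by
  rw [wave, Complex.cpow_def_of_ne_zero (Complex.ofReal_ne_zero.2 hy.ne'),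
    ← Complex.ofReal_log hy.le, ← Complex.exp_add]
  push_cast
  ring_nf

lemma wave_zero_zero : wave a 0 0 = fun _ => 1 := by
  ext y
  simp [wave]

lemma norm_wave (hy : 0 < y) : ‖wave a γ P y‖ = 1 := by
  rw [wave_eq_cexp hy, Complex.norm_exp_ofReal_mul_I]

lemma wave_sub (hy : 0 < y) :
    wave a (γ - γ₀) (P - P₀) y = (wave a γ₀ P₀ y)⁻¹ * wave a γ P y := by
  simp only [wave_eq_cexp hy, ← Complex.exp_neg, ← Complex.exp_add, Polynomial.eval_sub]
  push_cast
  ring_nf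

lemma hasLogMean_wave_zero (ha : a < 0) (hP : P.eval 0 = 0) (h : γ ≠ 0 ∨ P ≠ 0) :
    HasLogMean (wave a γ P) 0 := by
  set Q : ℝ[X] := Polynomial.C γ + eulerDeriv a P with hQdef
  have hQ : Q ≠ 0 := C_add_eulerDeriv_ne_zero ha.ne hP h
  have hlim : Tendsto (fun y : ℝ => y ^ a) (𝓝[>] 0) atTop := tendsto_rpow_neg_nhdsGT_zero ha
  have hphase : HasLogMean (fun y : ℝ => Complex.exp
      ((γ * Real.log y + P.eval (y ^ a) : ℝ) * Complex.I)) 0 := by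
    refine HasLogMean.cexp_mul_I_zero (q := fun y => Q.eval (y ^ a))
      (p := fun y => (eulerDeriv a Q).eval (y ^ a)) ?_ ?_
      (hlim.eventually (Q.eventually_atTop_not_isRoot hQ))
      (((isBigO_inv_eval_atTop hQ).comp_tendsto hlim).trans_isLittleO
        (isLittleO_const_log_nhdsGT_zero 1))
      ((tendsto_eulerDeriv_div_sq_atTop a Q).comp hlim)
    · filter_upwards [self_mem_nhdsWithin] with y hy
      refine (((Real.hasDerivAt_log (ne_of_gt hy)).const_mul γ).add
        (hasDerivAt_eval_rpow a P hy)).congr_deriv ?_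
      rw [hQdef, Polynomial.eval_add, Polynomial.eval_C, add_div, div_eq_mul_inv γ]
    · filter_upwards [self_mem_nhdsWithin] with y hy using hasDerivAt_eval_rpow a Q hy
  refine hphase.of_tendsto_sub_zero (tendsto_const_nhds.congr' ?_)
  filter_upwards [self_mem_nhdsWithin] with y hy
  rw [wave_eq_cexp hy, sub_self]

end Wave

section Main

variable {J F : Type*} [Fintype J] [NormedAddCommGroup F] [NormedSpace ℂ F]

lemma hasLogMean_sum_wave_sub {a : ℝ} (ha : a < 0) (c : J → F) {γ : J → ℝ} {φ : J → ℝ[X]}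
    (hφ0 : ∀ j, (φ j).eval 0 = 0) (hdist : Function.Injective fun j => (γ j, φ j)) (j₀ : J) :
    HasLogMean (fun y => ∑ j, wave a (γ j - γ j₀) (φ j - φ j₀) y • c j) (c j₀) := by
  classical
  have hterm (j : J) :
      HasLogMean (wave a (γ j - γ j₀) (φ j - φ j₀)) (if j = j₀ then 1 else 0) := by
    split_ifs with hj
    · simpa only [hj, sub_self, wave_zero_zero] using HasLogMean.const (1 : ℂ)
    · refine hasLogMean_wave_zero ha (by simp [hφ0]) ?_
      rw [sub_ne_zero, sub_ne_zero, ← not_and_or, ← Prod.mk_inj]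
      exact fun h => hj (hdist h)
  simpa using HasLogMean.sum (s := Finset.univ) fun j _ =>
    (hterm j).clm_apply (((1 : ℂ →L[ℂ] ℂ).smulRight (c j)).restrictScalars ℝ)

theorem stmt_4_general {a : ℝ} (ha : a < 0) {c : J → F} {γ : J → ℝ} {φ : J → ℝ[X]}
    (hφ0 : ∀ j, (φ j).eval 0 = 0) (hdist : Function.Injective fun j => (γ j, φ j))
    {w : ℝ → ℝ} (hw : (fun y => y⁻¹) =O[𝓝[>] 0] w) {f g : ℝ → F} (hg : g =o[𝓝[>] 0] w)
    (hf : ∀ᶠ y in 𝓝[>] 0, f y = w y • ∑ j, wave a (γ j) (φ j) y • c j + g y)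
    (hint : IntegrableAtFilter f (𝓝[>] 0)) (j : J) : c j = 0 := by
  have hinv0 : ∀ᶠ y : ℝ in 𝓝[>] 0, y⁻¹ ≠ 0 := by
    filter_upwards [self_mem_nhdsWithin] with y hy using inv_ne_zero (ne_of_gt hy)
  have hw0 : ∀ᶠ y in 𝓝[>] 0, w y ≠ 0 := by
    filter_upwards [hw.eq_zero_imp, hinv0] with y hwy hy using mt hwy hy
  have hmean : HasLogMean (fun y => (wave a (γ j) (φ j) y)⁻¹ • (w y)⁻¹ • f y) (c j) := by
    refine (hasLogMean_sum_wave_sub ha c hφ0 hdist j).of_tendsto_sub_zero ?_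
    have hgw : Tendsto (fun y => (w y)⁻¹ • g y) (𝓝[>] 0) (𝓝 0) := hg.tendsto_inv_smul_nhds_zero
    refine squeeze_zero_norm' ?_ (tendsto_zero_iff_norm_tendsto_zero.1 hgw)
    filter_upwards [hf, hw0, self_mem_nhdsWithin] with y hfy hwy hy
    simp only [hfy, smul_add, inv_smul_smul₀ hwy, wave_sub hy, mul_smul, ← Finset.smul_sum,
      add_sub_cancel_left, norm_smul, norm_inv, norm_wave hy, inv_one, one_mul, le_refl]
  refine hmean.eq_zero_of_isBigO hint ?_
  have hwinv : (fun y => (w y)⁻¹) =O[𝓝[>] 0] fun y => y := by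
    simpa only [inv_inv] using hw.inv_rev (hinv0.mono fun y hy h => absurd h hy)
  refine IsBigO.trans (IsBigO.of_bound' ?_) (hwinv.smul (isBigO_refl f _))
  filter_upwards [self_mem_nhdsWithin] with y hy
  rw [norm_smul, norm_inv, norm_wave hy, inv_one, one_mul]

end Main

lemma isBigO_inv_rpow_mul_log_pow {r : ℝ} (hr : r ≤ -1) (s : ℕ) :
    (fun y : ℝ => y⁻¹) =O[𝓝[>] 0] fun y => y ^ r * Real.log y ^ s := by
  have hpow : (fun y : ℝ => y⁻¹) =O[𝓝[>] 0] fun y => y ^ r := by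
    refine IsBigO.of_bound' ?_
    filter_upwards [Ioc_mem_nhdsGT one_pos] with y ⟨hy, hy1⟩
    rw [← Real.rpow_neg_one, Real.norm_of_nonneg (Real.rpow_nonneg hy.le _),
      Real.norm_of_nonneg (Real.rpow_nonneg hy.le _)]
    exact Real.rpow_le_rpow_of_exponent_ge hy hy1 hr
  have hlog : (fun _ : ℝ => (1 : ℝ)) =O[𝓝[>] 0] fun y => Real.log y ^ s := by
    simpa using (isLittleO_const_log_nhdsGT_zero 1).isBigO.pow s
  simpa using hpow.mul hlog

/-- **Noncompensation, part 3.** With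
`E(y) = ∑_{j∈J} c_j y^{iγ_j} e^{i φ_j(y^{-1/d})}` as before, let `b > 0`, `r ≤ -1`, `s ∈ ℕ`,
and `f(y) = y^r (log y)^s E(y) + g(y)` on `(0,b)` with `g(y) = o(y^r (log y)^s)` as `y → 0⁺`.
If `f` is Lebesgue integrable on `(0,b)`, then all `c_j = 0`. -/
theorem stmt_4 {J : Type*} [Fintype J] (d : ℕ) (hd : 0 < d)
    (c : J → ℂ) (γ : J → ℝ) (φ : J → Polynomial ℝ)
    (hφ0 : ∀ j, (φ j).eval 0 = 0)
    (hdist : Function.Injective fun j => (γ j, φ j))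
    (E : ℝ → ℂ)
    (hE : ∀ y : ℝ, 0 < y →
      E y = ∑ j, c j * (y : ℂ) ^ (Complex.I * (γ j : ℂ)) *
        Complex.exp (Complex.I * (((φ j).eval (y ^ (-1 / (d : ℝ))) : ℝ) : ℂ)))
    (b : ℝ) (hb : 0 < b) (r : ℝ) (hr : r ≤ -1) (s : ℕ)
    (f g : ℝ → ℂ)
    (hg : g =o[nhdsWithin 0 (Set.Ioi 0)] fun y : ℝ => y ^ r * (Real.log y) ^ s)
    (hf : ∀ y ∈ Set.Ioo (0 : ℝ) b,
      f y = ((y ^ r * (Real.log y) ^ s : ℝ) : ℂ) * E y + g y)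
    (hint : IntegrableOn f (Set.Ioo 0 b)) :
    ∀ j, c j = 0 := by
  have hexp : -1 / (d : ℝ) < 0 := div_neg_of_neg_of_pos neg_one_lt_zero (Nat.cast_pos.2 hd)
  refine stmt_4_general hexp hφ0 hdist (isBigO_inv_rpow_mul_log_pow hr s) hg ?_
    ⟨Set.Ioo 0 b, Ioo_mem_nhdsGT hb, hint⟩
  filter_upwards [Ioo_mem_nhdsGT hb] with y hy
  simp only [hf y hy, hE y hy.1, wave, Complex.real_smul, smul_eq_mul, mul_assoc,
    mul_comm (c _)]
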